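/- Let H be a MAX-PROD-CSP instance over a finite set V of Boolean variables all of whose constraints belong to AF or are unary. Then there exist a family of unary functions u_v : {0,1} → ℝ_{≥0} (v ∈ V) and an affine subset A ⊆ GF(2)^V (the solution set of a system of linear equations over GF(2) in the variables V) such that the measure of every assignment σ : V → {0,1} satisfies m(σ) = 1_A(σ) · ∏_{v∈V} u_v(σ(v)). -/

import Mathlib

open scoped NNReal

/-- The canonical embedding of Booleans into GF(2). -/
def boolZ : Bool → ZMod 2 := fun b => if b then 1 else 0

/-- A binary relation `R ⊆ {0,1}²` is affine if it is the solution set of a (possibly empty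
or inconsistent) system of linear equations over GF(2). -/
def IsAffine2 (R : Set (Bool × Bool)) : Prop :=
  ∃ (m : ℕ) (a b c : Fin m → ZMod 2),
    R = {p : Bool × Bool | ∀ i, a i * boolZ p.1 + b i * boolZ p.2 = c i}

open Classical in
/-- The class AF: constraints of the form `g(x₁,…,x_k) · ∏_{j ≠ i} R_j(x_i, x_j)` where `g`
is degenerate (a product of unary constraints) and each `R_j` is an affine relation. -/
def InAF {k : ℕ} (f : (Fin k → Bool) → ℝ≥0) : Prop :=
  ∃ (u : Fin k → Bool → ℝ≥0) (i : Fin k) (R : Fin k → Set (Bool × Bool)),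
    (∀ j, IsAffine2 (R j)) ∧
    ∀ x : Fin k → Bool,
      f x = (∏ j, u j (x j)) *
        ∏ j ∈ Finset.univ.filter (fun j => j ≠ i),
          (if (x i, x j) ∈ R j then 1 else 0)

/-- An affine subset of GF(2)^V: the solution set of a system of linear equations. -/
def IsAffineSet {n : ℕ} (A : Set (Fin n → ZMod 2)) : Prop :=
  ∃ (m : ℕ) (M : Fin m → Fin n → ZMod 2) (b : Fin m → ZMod 2),
    A = {x : Fin n → ZMod 2 | ∀ i, (∑ j, M i j * x j) = b i}

/-- A MAX-PROD-CSP instance over Boolean variables indexed by `Fin n`. -/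
abbrev CSPInstance (n : ℕ) : Type :=
  List (Σ k : ℕ, ((Fin k → Bool) → ℝ≥0) × (Fin k → Fin n))

/-- The multiplicative measure of an assignment `σ` for an instance `H`. -/
def cspMeasure {n : ℕ} (H : CSPInstance n) (σ : Fin n → Bool) : ℝ≥0 :=
  (H.map fun c => c.2.1 fun j => σ (c.2.2 j)).prod

/-! The functions of the form `σ ↦ 1_A(σ) · ∏ v, u v (σ v)` with `A` affine form a monoid under
pointwise multiplication, because affine sets are closed under intersection. It contains the unary
functions and the indicators of affine relations between two variables, hence every constraint in
AF, and the measure of an instance is a product of such constraints. -/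

section AffineSet

variable {n : ℕ}

theorem IsAffineSet.univ : IsAffineSet (Set.univ : Set (Fin n → ZMod 2)) :=
  ⟨0, Fin.elim0, Fin.elim0, by simp⟩

theorem IsAffineSet.inter {A B : Set (Fin n → ZMod 2)} (hA : IsAffineSet A)
    (hB : IsAffineSet B) : IsAffineSet (A ∩ B) := by
  obtain ⟨m, M, b, rfl⟩ := hA
  obtain ⟨m', M', b', rfl⟩ := hB
  refine ⟨m + m', Fin.append M M', Fin.append b b', ?_⟩
  ext x
  simp [Fin.forall_fin_add]

theorem IsAffine2.exists_isAffineSet {R : Set (Bool × Bool)} (hR : IsAffine2 R) (v w : Fin n) :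
    ∃ A : Set (Fin n → ZMod 2), IsAffineSet A ∧
      ∀ σ : Fin n → Bool, (fun i => boolZ (σ i)) ∈ A ↔ (σ v, σ w) ∈ R := by
  obtain ⟨m, a, b, c, rfl⟩ := hR
  -- The two contributions are added, so that the coefficient is `a i + b i` when `v = w`.
  refine ⟨_, ⟨m, fun i => Pi.single v (a i) + Pi.single w (b i), c, rfl⟩, fun σ => ?_⟩
  simp [add_mul, Finset.sum_add_distrib, Pi.single_apply]

end AffineSet

section AffineProduct

variable {n : ℕ} {M₀ : Type*} [CommMonoidWithZero M₀]

open Classical in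
/-- The functions of `n` Boolean variables that are the indicator of an affine subset of `GF(2)ⁿ`
times a product of unary functions, one for each variable, bundled as a submonoid under pointwise
multiplication to make closure under finite products available. -/
def affineProductSubmonoid (n : ℕ) (M₀ : Type*) [CommMonoidWithZero M₀] :
    Submonoid ((Fin n → Bool) → M₀) where
  carrier := {F | ∃ (u : Fin n → Bool → M₀) (A : Set (Fin n → ZMod 2)), IsAffineSet A ∧
    ∀ σ, F σ = (if (fun v => boolZ (σ v)) ∈ A then 1 else 0) * ∏ v, u v (σ v)}
  one_mem' := ⟨1, Set.univ, .univ, by simp⟩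
  mul_mem' := by
    rintro F G ⟨u, A, hA, hF⟩ ⟨u', A', hA', hG⟩
    refine ⟨u * u', A ∩ A', hA.inter hA', fun σ => ?_⟩
    simp only [Pi.mul_apply, hF, hG, Finset.prod_mul_distrib, Set.mem_inter_iff]
    rw [mul_mul_mul_comm, ite_zero_mul_ite_zero, mul_one]

theorem unary_mem_affineProductSubmonoid (g : Bool → M₀) (v : Fin n) :
    (fun σ => g (σ v)) ∈ affineProductSubmonoid n M₀ := by
  refine ⟨Pi.mulSingle v g, Set.univ, .univ, fun σ => ?_⟩
  rw [Finset.prod_eq_single_of_mem v (Finset.mem_univ v) fun w _ hw => by simp [hw]]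
  simp

theorem comp_mem_affineProductSubmonoid_of_unique {ι : Type*} [Unique ι] (f : (ι → Bool) → M₀)
    (x : ι → Fin n) : (fun σ => f fun j => σ (x j)) ∈ affineProductSubmonoid n M₀ := by
  convert unary_mem_affineProductSubmonoid (fun b => f fun _ => b) (x default) using 4 with σ j
  rw [Unique.eq_default j]

open Classical in
theorem IsAffine2.indicator_mem_affineProductSubmonoid {R : Set (Bool × Bool)}
    (hR : IsAffine2 R) (v w : Fin n) :
    (fun σ => if (σ v, σ w) ∈ R then 1 else 0) ∈ affineProductSubmonoid n M₀ := by
  obtain ⟨A, hA, hAR⟩ := hR.exists_isAffineSet v w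
  exact ⟨1, A, hA, fun σ => by simp [hAR σ]⟩

end AffineProduct

theorem InAF.comp_mem_affineProductSubmonoid {n k : ℕ} {f : (Fin k → Bool) → ℝ≥0} (hf : InAF f)
    (x : Fin k → Fin n) : (fun σ => f fun j => σ (x j)) ∈ affineProductSubmonoid n ℝ≥0 := by
  classical
  obtain ⟨u, i, R, hR, hf⟩ := hf
  have hfactor : (fun σ : Fin n → Bool => f fun j => σ (x j)) =
      (∏ j, fun σ => u j (σ (x j))) *
        ∏ j ∈ Finset.univ.filter (fun j => j ≠ i),
          fun σ => if (σ (x i), σ (x j)) ∈ R j then 1 else 0 := by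
    funext σ
    simp only [hf, Pi.mul_apply, Finset.prod_apply]
  rw [hfactor]
  exact mul_mem (prod_mem fun j _ => unary_mem_affineProductSubmonoid (u j) (x j))
    (prod_mem fun j _ => (hR j).indicator_mem_affineProductSubmonoid (x i) (x j))

theorem cspMeasure_eq_prod {n : ℕ} (H : CSPInstance n) :
    cspMeasure H = (H.map fun c σ => c.2.1 fun j => σ (c.2.2 j)).prod := by
  ext σ
  simp [cspMeasure, Pi.list_prod_apply, Function.comp_def]

open Classical in
/-- If every constraint of a MAX-PROD-CSP instance belongs to AF or is
unary, then the measure factors as the indicator of an affine subset `A ⊆ GF(2)^V` times a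
product of unary functions, one for each variable. -/
theorem stmt9 {n : ℕ} (H : CSPInstance n)
    (hH : ∀ c ∈ H, InAF c.2.1 ∨ c.1 = 1) :
    ∃ (u : Fin n → Bool → ℝ≥0) (A : Set (Fin n → ZMod 2)), IsAffineSet A ∧
      ∀ σ : Fin n → Bool,
        cspMeasure H σ
          = (if (fun v => boolZ (σ v)) ∈ A then 1 else 0) * ∏ v, u v (σ v) := by
  suffices cspMeasure H ∈ affineProductSubmonoid n ℝ≥0 from this
  rw [cspMeasure_eq_prod]
  refine list_prod_mem (List.forall_mem_map.2 ?_)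
  rintro ⟨k, f, x⟩ hc
  obtain hf | rfl : InAF f ∨ k = 1 := hH _ hc
  · exact hf.comp_mem_affineProductSubmonoid x
  · exact comp_mem_affineProductSubmonoid_of_unique f x
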